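/- ∫_0^{π/4} x² cot x dx = −(35/64) ζ(3) + (π²/32) log 2 + πG/4. -/

import Mathlib

/-! Summing `2 sin (2kx) sin x = cos ((2k-1)x) - cos ((2k+1)x)` over `1 ≤ k ≤ N` gives
`cot x = ∑_{k ≤ N} 2 sin (2kx) + cos ((2N+1)x) / sin x`. Multiply by `x²` and integrate over
`[0, π/4]`. Since `x² / sin x` is bounded there, the last term contributes `o(1)` by the
Riemann–Lebesgue lemma (`tendsto_remainder`), so the integral is the limit of the partial sums of
`2 ∫ x² sin (2kx)`, which two integrations by parts evaluate (`integral_sq_mul_sin`).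

Grouping `k = 2j+1` with `k = 2j+2` (`sineMoment_pair`) leaves, besides `∑ 1/(j+1)³ = ζ(3)`, four
series: `∑ (-1)^j/(2j+1)²`, which is Catalan's constant; `∑ 1/(2j+1)³ = (7/8) ζ(3)`;
`∑ (-1)^j/(j+1)³ = (3/4) ζ(3)`; and the conditionally convergent `∑ (-1)^j/(j+1) = log 2`. The last
is obtained along even partial sums from `H_{2m} - H_m → log 2`, so the limit is taken along
`N = 4m`.
-/

open Real

open Filter Topology MeasureTheory

lemma sum_sin_mul_sin (N : ℕ) (x : ℝ) :
    (∑ k ∈ Finset.range N, 2 * sin (2 * ((k : ℝ) + 1) * x)) * sin x =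
      cos x - cos ((2 * (N : ℝ) + 1) * x) := by
  induction N with
  | zero => simp
  | succ n ih =>
    rw [Finset.sum_range_succ, add_mul, ih]
    push_cast
    have h1 : cos ((2 * (n : ℝ) + 1) * x) = cos (2 * ((n : ℝ) + 1) * x - x) := by ring_nf
    have h2 : cos ((2 * ((n : ℝ) + 1) + 1) * x) = cos (2 * ((n : ℝ) + 1) * x + x) := by ring_nf
    rw [h1, h2, cos_sub, cos_add]
    ring

lemma sin_pos_of_mem {x : ℝ} (h0 : 0 < x) (h1 : x ≤ π / 4) : 0 < sin x :=
  sin_pos_of_pos_of_lt_pi h0 (by linarith [pi_pos])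

/-- The quotient `x / sinc x` is the continuous extension of `x² / sin x` to `x = 0`. -/
lemma sq_mul_cot_eq (N : ℕ) {x : ℝ} (h0 : 0 ≤ x) (h1 : x ≤ π / 4) :
    x ^ 2 * cot x = (∑ k ∈ Finset.range N, 2 * (x ^ 2 * sin (2 * ((k : ℝ) + 1) * x))) +
      x / sinc x * cos ((2 * (N : ℝ) + 1) * x) := by
  rcases h0.eq_or_lt with rfl | h0
  · simp
  have hs := (sin_pos_of_mem h0 h1).ne'
  have hsum := sum_sin_mul_sin N x
  have e : (∑ k ∈ Finset.range N, 2 * (x ^ 2 * sin (2 * ((k : ℝ) + 1) * x))) =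
      x ^ 2 * ∑ k ∈ Finset.range N, 2 * sin (2 * ((k : ℝ) + 1) * x) := by
    rw [Finset.mul_sum]
    exact Finset.sum_congr rfl fun k _ => by ring
  rw [e, eq_div_of_mul_eq hs hsum, cot_eq_cos_div_sin, sinc_of_ne_zero h0.ne']
  field_simp
  ring

lemma continuousOn_div_sinc : ContinuousOn (fun x : ℝ => x / sinc x) (Set.Icc 0 (π / 4)) := by
  refine continuousOn_id.div continuous_sinc.continuousOn fun x hx => ?_
  rcases hx.1.eq_or_lt with rfl | h0
  · simp
  · rw [sinc_of_ne_zero h0.ne']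
    exact div_ne_zero (sin_pos_of_mem h0 hx.2).ne' h0.ne'

lemma intervalIntegrable_remainder (w : ℝ) :
    IntervalIntegrable (fun x : ℝ => x / sinc x * cos (w * x)) volume 0 (π / 4) := by
  apply ContinuousOn.intervalIntegrable
  rw [Set.uIcc_of_le (by positivity)]
  exact continuousOn_div_sinc.mul (by fun_prop)

/-- Riemann–Lebesgue for the cosine transform over a bounded interval. -/
lemma tendsto_integral_mul_cos {f : ℝ → ℝ} {a b : ℝ} (hab : a ≤ b)
    (hf : ContinuousOn f (Set.Icc a b)) :
    Tendsto (fun w : ℝ => ∫ x in a..b, f x * cos (w * x)) atTop (𝓝 0) := by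
  have hRL := Real.tendsto_integral_exp_smul_cocompact
    ((Set.Ioc a b).indicator fun x => (f x : ℂ))
  have hscale : Tendsto (fun w : ℝ => w / (2 * π)) atTop (cocompact ℝ) :=
    (tendsto_id.atTop_div_const (by positivity)).mono_right atTop_le_cocompact
  have h := (Complex.continuous_re.tendsto _).comp (hRL.comp hscale)
  simp only [Complex.zero_re] at h
  refine h.congr fun w => ?_
  have e1 : ∀ v : ℝ, Real.fourierChar (-(v * (w / (2 * π)))) •
      (Set.Ioc a b).indicator (fun x => (f x : ℂ)) v =
      (Set.Ioc a b).indicator (fun v => Complex.exp (((-(w * v) : ℝ) : ℂ) * Complex.I) * f v) v := by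
    intro v
    by_cases hv : v ∈ Set.Ioc a b
    · rw [Set.indicator_of_mem hv, Set.indicator_of_mem hv, Circle.smul_def,
        Real.fourierChar_apply, smul_eq_mul]
      congr 4
      field_simp
    · simp [Set.indicator_of_notMem hv]
  simp only [Function.comp_apply, e1]
  rw [integral_indicator measurableSet_Ioc, intervalIntegral.integral_of_le hab]
  have hint : Integrable (fun v => Complex.exp (((-(w * v) : ℝ) : ℂ) * Complex.I) * f v)
      (volume.restrict (Set.Ioc a b)) := by
    have : ContinuousOn (fun v => Complex.exp (((-(w * v) : ℝ) : ℂ) * Complex.I) * f v)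
        (Set.Icc a b) := by
      refine ContinuousOn.mul (by fun_prop) (Complex.continuous_ofReal.comp_continuousOn hf)
    exact this.integrableOn_Icc.mono_set Set.Ioc_subset_Icc_self
  have := integral_re hint
  simp only [RCLike.re_to_complex] at this
  rw [← this]
  refine integral_congr_ae (ae_of_all _ fun v => ?_)
  simp only [Complex.mul_re, Complex.exp_ofReal_mul_I_re, Complex.ofReal_re, Complex.ofReal_im,
    mul_zero, sub_zero, cos_neg]
  ring

lemma tendsto_remainder :
    Tendsto (fun N : ℕ => ∫ x in (0 : ℝ)..(π / 4), x / sinc x * cos ((2 * (N : ℝ) + 1) * x))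
      atTop (𝓝 0) := by
  have hN : Tendsto (fun N : ℕ => 2 * (N : ℝ) + 1) atTop atTop :=
    tendsto_atTop_add_const_right _ _
      (tendsto_natCast_atTop_atTop.const_mul_atTop (by norm_num))
  exact (tendsto_integral_mul_cos (by positivity) continuousOn_div_sinc).comp hN

lemma integral_sq_mul_sin {c : ℝ} (hc : c ≠ 0) (b : ℝ) :
    ∫ x in (0 : ℝ)..b, x ^ 2 * sin (c * x) =
      -b ^ 2 * cos (c * b) / c + 2 * b * sin (c * b) / c ^ 2 + 2 * (cos (c * b) - 1) / c ^ 3 := by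
  have hd : ∀ x ∈ Set.uIcc 0 b, HasDerivAt
      (fun x => -x ^ 2 * cos (c * x) / c + 2 * x * sin (c * x) / c ^ 2 + 2 * cos (c * x) / c ^ 3)
      (x ^ 2 * sin (c * x)) x := by
    intro x _
    have hl : HasDerivAt (fun x : ℝ => c * x) c x := by
      simpa using (hasDerivAt_id x).const_mul c
    have h1 := (((hasDerivAt_pow 2 x).neg.mul hl.cos).div_const c).add
      ((((hasDerivAt_id x).const_mul 2).mul hl.sin).div_const (c ^ 2)) |>.add
      ((hl.cos.const_mul 2).div_const (c ^ 3))
    refine h1.congr_deriv ?_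
    simp
    field_simp
    ring
  rw [intervalIntegral.integral_eq_sub_of_hasDerivAt hd
    (Continuous.intervalIntegrable (by fun_prop) _ _)]
  simp
  ring

/-- The `k`-th term `2 ∫₀^{π/4} x² sin (2(k+1)x) dx`, evaluated. -/
noncomputable def sineMoment (k : ℕ) : ℝ :=
  -(π ^ 2 / 16) * cos (((k : ℝ) + 1) * (π / 2)) / ((k : ℝ) + 1) +
    π / 4 * sin (((k : ℝ) + 1) * (π / 2)) / ((k : ℝ) + 1) ^ 2 +
    (cos (((k : ℝ) + 1) * (π / 2)) - 1) / (2 * ((k : ℝ) + 1) ^ 3)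

lemma integral_sq_mul_cot_eq (N : ℕ) :
    ∫ x in (0 : ℝ)..(π / 4), x ^ 2 * cot x = (∑ k ∈ Finset.range N, sineMoment k) +
      ∫ x in (0 : ℝ)..(π / 4), x / sinc x * cos ((2 * (N : ℝ) + 1) * x) := by
  have hcongr : ∫ x in (0 : ℝ)..(π / 4), x ^ 2 * cot x = ∫ x in (0 : ℝ)..(π / 4),
      ((∑ k ∈ Finset.range N, 2 * (x ^ 2 * sin (2 * ((k : ℝ) + 1) * x))) +
        x / sinc x * cos ((2 * (N : ℝ) + 1) * x)) := by
    refine intervalIntegral.integral_congr fun x hx => ?_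
    rw [Set.uIcc_of_le (by positivity)] at hx
    exact sq_mul_cot_eq N hx.1 hx.2
  rw [hcongr, intervalIntegral.integral_add
    (Continuous.intervalIntegrable (by fun_prop) _ _) (intervalIntegrable_remainder _),
    intervalIntegral.integral_finsetSum
      fun k _ => Continuous.intervalIntegrable (by fun_prop) _ _]
  congr 1
  refine Finset.sum_congr rfl fun k _ => ?_
  have hk : (k : ℝ) + 1 ≠ 0 := by positivity
  rw [intervalIntegral.integral_const_mul, integral_sq_mul_sin (by positivity), sineMoment]
  have e : 2 * ((k : ℝ) + 1) * (π / 4) = ((k : ℝ) + 1) * (π / 2) := by ring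
  rw [e]
  field_simp
  ring

lemma sineMoment_pair (j : ℕ) : sineMoment (2 * j) + sineMoment (2 * j + 1) =
    π / 4 * ((-1) ^ j / (2 * (j : ℝ) + 1) ^ 2) - 1 / 2 * (1 / (2 * (j : ℝ) + 1) ^ 3) +
      π ^ 2 / 32 * ((-1) ^ j / ((j : ℝ) + 1)) - 1 / 16 * ((-1) ^ j / ((j : ℝ) + 1) ^ 3) -
      1 / 16 * (1 / ((j : ℝ) + 1) ^ 3) := by
  have a1 : (((2 * j : ℕ) : ℝ) + 1) * (π / 2) = π / 2 + j * π := by push_cast; ring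
  have a2 : (((2 * j + 1 : ℕ) : ℝ) + 1) * (π / 2) = (j + 1 : ℕ) * π := by push_cast; ring
  have c1 : cos (π / 2 + j * π) = 0 := by rw [cos_add_nat_mul_pi]; simp
  have s1 : sin (π / 2 + j * π) = (-1) ^ j := by rw [sin_add_nat_mul_pi]; simp
  rw [sineMoment, sineMoment, a1, a2, c1, s1, cos_nat_mul_pi, sin_nat_mul_pi]
  have h1 : (j : ℝ) + 1 ≠ 0 := by positivity
  have h2 : 2 * (j : ℝ) + 1 ≠ 0 := by positivity
  have h3 : ((2 * j + 1 : ℕ) : ℝ) + 1 = 2 * ((j : ℝ) + 1) := by push_cast; ring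
  rw [h3, pow_succ]
  push_cast
  field_simp
  ring

lemma sum_pair (a : ℕ → ℝ) (n : ℕ) :
    ∑ k ∈ Finset.range (2 * n), a k = ∑ j ∈ Finset.range n, (a (2 * j) + a (2 * j + 1)) := by
  induction n with
  | zero => simp
  | succ n ih =>
    rw [Finset.sum_range_succ, ← ih, mul_add, mul_one, Finset.sum_range_succ,
      Finset.sum_range_succ]
    ring

lemma sum_alternating (m : ℕ) : ∑ j ∈ Finset.range (2 * m), (-1 : ℝ) ^ j / ((j : ℝ) + 1) =
    (harmonic (2 * m) : ℝ) - (harmonic m : ℝ) := by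
  induction m with
  | zero => simp
  | succ m ih =>
    rw [mul_add, mul_one, Finset.sum_range_succ, Finset.sum_range_succ, ih, harmonic_succ,
      harmonic_succ, harmonic_succ, pow_succ, pow_mul]
    have h1 : (m : ℝ) + 1 ≠ 0 := by positivity
    have h2 : 2 * (m : ℝ) + 1 ≠ 0 := by positivity
    have h3 : 2 * (m : ℝ) + 1 + 1 ≠ 0 := by positivity
    push_cast
    norm_num
    field_simp
    ring

lemma tendsto_two_mul : Tendsto (fun m : ℕ => 2 * m) atTop atTop :=
  tendsto_id.const_mul_atTop' (by norm_num)

/-- The `γ` in `H_n = log n + γ + o(1)` cancels in `H_{2m} - H_m`. -/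
lemma tendsto_alternating :
    Tendsto (fun m : ℕ => ∑ j ∈ Finset.range (2 * m), (-1 : ℝ) ^ j / ((j : ℝ) + 1))
      atTop (𝓝 (log 2)) := by
  have h := ((tendsto_harmonic_sub_log.comp tendsto_two_mul).sub
    tendsto_harmonic_sub_log).add_const (log 2)
  rw [sub_self, zero_add] at h
  refine h.congr' ?_
  filter_upwards [eventually_ne_atTop 0] with m hm
  have hm' : (m : ℝ) ≠ 0 := by exact_mod_cast hm
  rw [sum_alternating]
  simp only [Function.comp_apply, Nat.cast_mul, Nat.cast_ofNat]
  rw [log_mul two_ne_zero hm']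
  ring

lemma summable_cube : Summable (fun n : ℕ => 1 / ((n : ℝ) + 1) ^ 3) := by
  have := (summable_nat_add_iff 1).2 (Real.summable_one_div_nat_pow.2 (by norm_num : 1 < 3))
  simpa using this

lemma hasSum_odd_cube : HasSum (fun n : ℕ => 1 / (2 * (n : ℝ) + 1) ^ 3)
    (7 / 8 * ∑' n : ℕ, 1 / ((n : ℝ) + 1) ^ 3) := by
  have hs : Summable (fun n : ℕ => 1 / (2 * (n : ℝ) + 1) ^ 3) := by
    simpa [Function.comp_def] using summable_cube.comp_injective (i := fun n : ℕ => 2 * n)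
      (mul_right_injective₀ two_ne_zero)
  have hev : HasSum (fun n : ℕ => 1 / (((2 * n + 1 : ℕ) : ℝ) + 1) ^ 3)
      (1 / 8 * ∑' n : ℕ, 1 / ((n : ℝ) + 1) ^ 3) := by
    refine (summable_cube.hasSum.mul_left (1 / 8)).congr_fun fun n => ?_
    have h1 : (n : ℝ) + 1 ≠ 0 := by positivity
    have h3 : ((2 * n + 1 : ℕ) : ℝ) + 1 = 2 * ((n : ℝ) + 1) := by push_cast; ring
    rw [h3]
    field_simp
    norm_num
  have hod : HasSum (fun n : ℕ => 1 / (((2 * n : ℕ) : ℝ) + 1) ^ 3)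
      (∑' n : ℕ, 1 / (2 * (n : ℝ) + 1) ^ 3) := by
    simpa using hs.hasSum
  have huniq := (HasSum.even_add_odd (f := fun n : ℕ => 1 / ((n : ℝ) + 1) ^ 3) hod hev).unique
    summable_cube.hasSum
  convert hs.hasSum using 1
  linarith

lemma hasSum_alternating_cube : HasSum (fun n : ℕ => (-1 : ℝ) ^ n / ((n : ℝ) + 1) ^ 3)
    (3 / 4 * ∑' n : ℕ, 1 / ((n : ℝ) + 1) ^ 3) := by
  have hev : HasSum (fun n : ℕ => (-1 : ℝ) ^ (2 * n) / (((2 * n : ℕ) : ℝ) + 1) ^ 3)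
      (7 / 8 * ∑' n : ℕ, 1 / ((n : ℝ) + 1) ^ 3) := by
    simpa [pow_mul] using hasSum_odd_cube
  have hod : HasSum (fun n : ℕ => (-1 : ℝ) ^ (2 * n + 1) / (((2 * n + 1 : ℕ) : ℝ) + 1) ^ 3)
      (-(1 / 8) * ∑' n : ℕ, 1 / ((n : ℝ) + 1) ^ 3) := by
    refine (summable_cube.hasSum.mul_left (-(1 / 8))).congr_fun fun n => ?_
    have h1 : (n : ℝ) + 1 ≠ 0 := by positivity
    have h3 : ((2 * n + 1 : ℕ) : ℝ) + 1 = 2 * ((n : ℝ) + 1) := by push_cast; ring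
    rw [h3, pow_succ, pow_mul]
    norm_num
    field_simp
    norm_num
  convert HasSum.even_add_odd (f := fun n : ℕ => (-1 : ℝ) ^ n / ((n : ℝ) + 1) ^ 3) hev hod using 1
  ring

lemma summable_catalan : Summable (fun n : ℕ => (-1 : ℝ) ^ n / (2 * (n : ℝ) + 1) ^ 2) := by
  have h := (summable_nat_add_iff 1).2 (Real.summable_one_div_nat_pow.2 (by norm_num : 1 < 2))
  have h2 := h.comp_injective (i := fun n : ℕ => 2 * n) (mul_right_injective₀ two_ne_zero)
  refine Summable.of_norm ?_
  simpa [Function.comp_def] using h2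

/-- `∫_0^{π/4} x² cot x dx = −(35/64)ζ(3) + (π²/32) log 2 + πG/4`,
where `G` is Catalan's constant. -/
theorem stmt_11 :
    ∫ x in (0 : ℝ)..(π / 4), x ^ 2 * Real.cot x =
      -(35 / 64) * (∑' n : ℕ, 1 / ((n : ℝ) + 1) ^ 3) + (π ^ 2 / 32) * Real.log 2 +
        π * (∑' n : ℕ, (-1 : ℝ) ^ n / (2 * (n : ℝ) + 1) ^ 2) / 4 := by
  have h4 : Tendsto (fun m : ℕ => 2 * (2 * m)) atTop atTop := tendsto_two_mul.comp tendsto_two_mul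
  have hlim := ((((summable_catalan.hasSum.tendsto_sum_nat.comp tendsto_two_mul).const_mul
    (π / 4)).sub ((hasSum_odd_cube.tendsto_sum_nat.comp tendsto_two_mul).const_mul (1 / 2))).add
    (tendsto_alternating.const_mul (π ^ 2 / 32))).sub
    ((hasSum_alternating_cube.tendsto_sum_nat.comp tendsto_two_mul).const_mul (1 / 16)) |>.sub
    ((summable_cube.hasSum.tendsto_sum_nat.comp tendsto_two_mul).const_mul (1 / 16)) |>.add
    (tendsto_remainder.comp h4)
  have hconst := tendsto_const_nhds (x := ∫ x in (0 : ℝ)..(π / 4), x ^ 2 * Real.cot x)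
    (f := (atTop : Filter ℕ))
  refine (tendsto_nhds_unique (hconst.congr fun m => ?_) hlim).trans (by ring)
  rw [integral_sq_mul_cot_eq (2 * (2 * m)), sum_pair]
  simp only [sineMoment_pair, Finset.sum_add_distrib, Finset.sum_sub_distrib, ← Finset.mul_sum,
    Function.comp_apply]
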